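/- For every unit quaternion q, the map x ↦ x·q⁻¹ of ℝ⁴ ≅ ℍ is in SO(4), and the induced linear map on Λ²ℝ⁴ (sending x∧y to (xq⁻¹)∧(yq⁻¹)) fixes every self-dual 2-form, i.e. restricts to the identity on Λ²₊. -/

import Mathlib

noncomputable section

open scoped ComplexConjugate

/-- `ℝ⁴` with its standard basis. -/
abbrev V4 := Fin 4 → ℝ
/-- `Λ²ℝ⁴` in the coordinates given by the basis
`e₁∧e₂, e₁∧e₃, e₁∧e₄, e₂∧e₃, e₂∧e₄, e₃∧e₄` (0-indexed). -/
abbrev L6 := Fin 6 → ℝ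
/-- Endomorphisms of `Λ²ℝ⁴`, as `6×6` matrices. -/
abbrev M6 := Fin 6 → Fin 6 → ℝ

/-- standard basis of ℝ⁴ -/
def std4 (i : Fin 4) : V4 := fun j => if j = i then 1 else 0

/-- the standard inner product of ℝ⁴ -/
def ip4 (x y : V4) : ℝ := ∑ i, x i * y i

/-- the index pairs for the basis of Λ²ℝ⁴ -/
def pr : Fin 6 → Fin 4 × Fin 4 := ![(0,1),(0,2),(0,3),(1,2),(1,3),(2,3)]

/-- the wedge product `x ∧ y` of two vectors, in coordinates.  With this
coordinate expression, the standard inner product `ip6` below satisfies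
`⟨x∧y, z∧t⟩ = ⟨x,z⟩⟨y,t⟩ − ⟨x,t⟩⟨y,z⟩`. -/
def wedge (x y : V4) : L6 := fun k => x (pr k).1 * y (pr k).2 - x (pr k).2 * y (pr k).1

/-- the inner product of Λ²ℝ⁴ -/
def ip6 (a b : L6) : ℝ := ∑ k, a k * b k

/-- The Hodge star operator on Λ²ℝ⁴. -/
def hodge (w : L6) : L6 := ![w 5, -(w 4), w 3, w 2, -(w 1), w 0]

/-- self-dual 2-forms (the +1 eigenspace Λ²₊ of the Hodge star) -/
def SelfDual (w : L6) : Prop := hodge w = w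
/-- anti-self-dual 2-forms (the −1 eigenspace Λ²₋ of the Hodge star) -/
def AntiSelfDual (w : L6) : Prop := hodge w = -w

/-- application of an endomorphism (matrix) of Λ²ℝ⁴ to a 2-form -/
def appM (A : M6) (w : L6) : L6 := fun k => ∑ l, A k l * w l

/-- symmetry of an endomorphism of Λ²ℝ⁴ w.r.t. the inner product -/
def IsSymm6 (A : M6) : Prop := ∀ a b : L6, ip6 (appM A a) b = ip6 a (appM A b)

/-- the first Bianchi identity -/
def Bianchi (A : M6) : Prop := ∀ x y z t : V4,
  ip6 (appM A (wedge x y)) (wedge z t) + ip6 (appM A (wedge z x)) (wedge y t)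
    + ip6 (appM A (wedge y z)) (wedge x t) = 0

/-- algebraic curvature operators on ℝ⁴ : symmetric endomorphisms of Λ²ℝ⁴
satisfying the first Bianchi identity.  The set of these is `S²_BΛ²ℝ⁴`. -/
def IsCurvOp (A : M6) : Prop := IsSymm6 A ∧ Bianchi A

/-- the scalar curvature: twice the trace -/
def scal (A : M6) : ℝ := 2 * ∑ k, A k k

/-- orthogonal projection P₊ of Λ²ℝ⁴ onto Λ²₊ -/
def pplus (w : L6) : L6 := (1/2 : ℝ) • (w + hodge w)

/-- the self-dual Weyl part W₊ of a curvature operator, as a map on Λ²₊: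
`W₊η = P₊(Rη) − (scal(R)/12)·η`. -/
def Wplus (A : M6) (η : L6) : L6 := pplus (appM A η) - (scal A / 12) • η

/-- `R` is PIC₊ : the quadratic form `η ↦ ⟨Rη,η⟩` on Λ²₊ is 2-positive. -/
def PICp (A : M6) : Prop := ∀ η ζ : L6, SelfDual η → SelfDual ζ →
  ip6 η η = 1 → ip6 ζ ζ = 1 → ip6 η ζ = 0 →
  0 < ip6 (appM A η) η + ip6 (appM A ζ) ζ

/-- `R` is NNIC₊ : the quadratic form `η ↦ ⟨Rη,η⟩` on Λ²₊ is 2-nonnegative. -/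
def NNICp (A : M6) : Prop := ∀ η ζ : L6, SelfDual η → SelfDual ζ →
  ip6 η η = 1 → ip6 ζ ζ = 1 → ip6 η ζ = 0 →
  0 ≤ ip6 (appM A η) η + ip6 (appM A ζ) ζ

/-- `R` is PIC₋ : the quadratic form `η ↦ ⟨Rη,η⟩` on Λ²₋ is 2-positive. -/
def PICm (A : M6) : Prop := ∀ η ζ : L6, AntiSelfDual η → AntiSelfDual ζ →
  ip6 η η = 1 → ip6 ζ ζ = 1 → ip6 η ζ = 0 →
  0 < ip6 (appM A η) η + ip6 (appM A ζ) ζ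

/-- `R` is NNIC₋ : the quadratic form `η ↦ ⟨Rη,η⟩` on Λ²₋ is 2-nonnegative. -/
def NNICm (A : M6) : Prop := ∀ η ζ : L6, AntiSelfDual η → AntiSelfDual ζ →
  ip6 η η = 1 → ip6 ζ ζ = 1 → ip6 η ζ = 0 →
  0 ≤ ip6 (appM A η) η + ip6 (appM A ζ) ζ

/- ### complexifications -/

/-- `ℂ⁴` -/
abbrev VC4 := Fin 4 → ℂ
/-- `Λ²ℂ⁴` -/
abbrev LC6 := Fin 6 → ℂ

/-- the wedge product on ℂ⁴ -/
def wedgeC (x y : VC4) : LC6 := fun k => x (pr k).1 * y (pr k).2 - x (pr k).2 * y (pr k).1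

/-- the complex-bilinear extension of the inner product of ℝ⁴ -/
def bilC4 (x y : VC4) : ℂ := ∑ i, x i * y i

/-- the complex-bilinear extension of the inner product of Λ²ℝ⁴ -/
def bilC6 (a b : LC6) : ℂ := ∑ k, a k * b k

/-- the Hermitian inner product `⟨·,·⟩_h` on Λ²ℂ⁴ associated to the real inner
product on Λ²ℝ⁴ -/
def hermC6 (a b : LC6) : ℂ := ∑ k, a k * conj (b k)

/-- the complex-linear extension of an endomorphism of Λ²ℝ⁴ to Λ²ℂ⁴ -/
def appMC (A : M6) (w : LC6) : LC6 := fun k => ∑ l, (A k l : ℂ) * w l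

/-- the complex-linear extension of the Hodge star -/
def hodgeC (w : LC6) : LC6 := ![w 5, -(w 4), w 3, w 2, -(w 1), w 0]

/-- membership in `Λ²₊ ⊗ ℂ` -/
def SelfDualC (w : LC6) : Prop := hodgeC w = w



/-- The induced linear map `Λ²f` on `Λ²ℝ⁴` of a (linear) map `f : ℝ⁴ → ℝ⁴`,
sending `x∧y` to `f x ∧ f y`, given by its matrix in the standard basis. -/
def L2mapM (f : V4 → V4) : M6 :=
  fun k l => wedge (f (std4 (pr l).1)) (f (std4 (pr l).2)) k


/-- the identification ℝ⁴ ≅ ℍ, (x,y,z,t) ↦ x + yi + zj + tk -/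
def toQuat (x : V4) : Quaternion ℝ := ⟨x 0, x 1, x 2, x 3⟩

/-- the identification ℍ ≅ ℝ⁴ -/
def ofQuat (q : Quaternion ℝ) : V4 := ![q.re, q.imI, q.imJ, q.imK]


/-!
Let `R` be right multiplication by a quaternion `p`. Since `(x p) * star (y p) = |p|² x * star y`,
both parts of `x * star y` are multiplied by `|p|²` under `R`. The real part is `⟨x, y⟩`, so `R` is
conformal. The imaginary part is, up to sign, the self-dual part of `x ∧ y`, so the pairing of
`x ∧ y` with a self-dual form is multiplied by `|p|²` as well; as the adjoint of `R` is right
multiplication by `star p`, this says that `Λ²R` is the scalar `|p|²` on `Λ²₊`. Finally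
`ω = e₁∧e₂ + e₃∧e₄` is self-dual with `ω ∧ ω = 2 vol`, and comparing `Λ²R ω ∧ Λ²R ω` with `ω ∧ ω`
gives `det R = |p|⁴`.
-/

section Wedge

theorem std4_eq_single (i : Fin 4) : std4 i = Pi.single i 1 := by
  ext j
  simp [std4, Pi.single_apply]

theorem ip6_wedge_wedge (x y z t : V4) :
    ip6 (wedge x y) (wedge z t) = ip4 x z * ip4 y t - ip4 x t * ip4 y z := by
  simp only [ip6, ip4, wedge, pr, Fin.sum_univ_six, Fin.sum_univ_four, Matrix.cons_val]
  ring

theorem wedge_std4_pr (k : Fin 6) : wedge (std4 (pr k).1) (std4 (pr k).2) = Pi.single k 1 := by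
  ext l
  fin_cases k <;> fin_cases l <;> simp [wedge, std4, pr]

theorem eq_of_forall_ip6_wedge_eq {v w : L6}
    (h : ∀ x y, ip6 (wedge x y) v = ip6 (wedge x y) w) : v = w := by
  ext k
  have hk : ip6 (Pi.single k 1) v = ip6 (Pi.single k 1) w := wedge_std4_pr k ▸ h _ _
  rwa [ip6, ip6, ← dotProduct, ← dotProduct, single_one_dotProduct, single_one_dotProduct] at hk

end Wedge

section InducedMap

theorem appM_L2mapM_wedge (f : V4 →ₗ[ℝ] V4) (x y : V4) :
    appM (L2mapM f) (wedge x y) = wedge (f x) (f y) := by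
  have apply_eq_sum (z : V4) : f z = ∑ i, z i • f (std4 i) := by
    simp only [std4_eq_single, ← map_smul, ← map_sum, ← pi_eq_sum_univ' z]
  ext k
  rw [apply_eq_sum x, apply_eq_sum y]
  simp only [appM, L2mapM, wedge, pr, Fin.sum_univ_six, Fin.sum_univ_four, Matrix.cons_val,
    Pi.add_apply, Pi.smul_apply, smul_eq_mul]
  ring

theorem ip6_wedge_appM_L2mapM {f g : V4 → V4} (hfg : ∀ x y, ip4 x (f y) = ip4 (g x) y)
    (x y : V4) (w : L6) :
    ip6 (wedge x y) (appM (L2mapM f) w) = ip6 (wedge (g x) (g y)) w := by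
  have vecMul_eq : Matrix.vecMul (wedge x y) (L2mapM f) = wedge (g x) (g y) := by
    ext l
    calc
      _ = ip6 (wedge x y) (wedge (f (std4 (pr l).1)) (f (std4 (pr l).2))) := rfl
      _ = ip6 (wedge (g x) (g y)) (wedge (std4 (pr l).1) (std4 (pr l).2)) := by
        simp only [ip6_wedge_wedge, hfg]
      _ = wedge (g x) (g y) l := by
        rw [wedge_std4_pr]
        exact dotProduct_single_one _ l
  rw [← vecMul_eq]
  exact Matrix.dotProduct_mulVec _ _ _

end InducedMap

section Determinant

/-- The Kähler form `e₁∧e₂ + e₃∧e₄` of `ℝ⁴ = ℂ²`, a self-dual form whose square is twice the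
volume form; it is used to read off the determinant of a map from its action on `Λ²₊`. -/
def kahlerForm : L6 := wedge (std4 0) (std4 1) + wedge (std4 2) (std4 3)

theorem selfDual_kahlerForm : SelfDual kahlerForm := by
  ext k
  fin_cases k <;> simp [kahlerForm, hodge, wedge, pr, std4]

theorem ip6_hodge_smul_smul (c : ℝ) (w : L6) :
    ip6 (hodge (c • w)) (c • w) = c ^ 2 * ip6 (hodge w) w := by
  simp only [ip6, hodge, Fin.sum_univ_six, Matrix.cons_val, Pi.smul_apply, smul_eq_mul]
  ring

-- `⟨*w, w⟩` is the coefficient of `w ∧ w` with respect to the volume form.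
theorem ip6_hodge_wedge_add_wedge (v : Fin 4 → V4) :
    ip6 (hodge (wedge (v 0) (v 1) + wedge (v 2) (v 3))) (wedge (v 0) (v 1) + wedge (v 2) (v 3)) =
      2 * (Matrix.of fun i j => v j i).det := by
  rw [Matrix.det_succ_row_zero]
  simp only [Matrix.det_fin_three, Matrix.submatrix_apply, Matrix.of_apply, Fin.sum_univ_four,
    Fin.sum_univ_six, Fin.succAbove, Fin.reduceSucc, Fin.reduceCastSucc, Fin.reduceLT, if_true,
    if_false, ip6, hodge, wedge, pr, Pi.add_apply, Matrix.cons_val, Fin.coe_ofNat_eq_mod]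
  ring

theorem ip6_hodge_kahlerForm : ip6 (hodge kahlerForm) kahlerForm = 2 := by
  have of_std4 : (Matrix.of fun i j => std4 j i) = 1 := by
    ext i j
    rw [Matrix.one_apply, Matrix.of_apply, std4]
  rw [kahlerForm, ip6_hodge_wedge_add_wedge std4, of_std4, Matrix.det_one, mul_one]

theorem det_eq_sq_of_appM_L2mapM_kahlerForm {f : V4 →ₗ[ℝ] V4} {c : ℝ}
    (hf : appM (L2mapM f) kahlerForm = c • kahlerForm) :
    (Matrix.of fun i j => f (std4 j) i).det = c ^ 2 := by
  have wedge_add_wedge_eq : wedge (f (std4 0)) (f (std4 1)) + wedge (f (std4 2)) (f (std4 3)) =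
      c • kahlerForm := by
    rw [← hf, ← appM_L2mapM_wedge, ← appM_L2mapM_wedge]
    exact (Matrix.mulVec_add (L2mapM f) _ _).symm
  have two_mul_det := ip6_hodge_wedge_add_wedge fun j => f (std4 j)
  rw [wedge_add_wedge_eq, ip6_hodge_smul_smul, ip6_hodge_kahlerForm] at two_mul_det
  linarith

end Determinant

section RightMul

/-- Right multiplication by the quaternion `p`, as a linear map of `ℝ⁴` under the
identification `ℝ⁴ ≅ ℍ`. -/
def rightMul (p : Quaternion ℝ) : V4 →ₗ[ℝ] V4 where
  toFun x := ofQuat (toQuat x * p)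
  map_add' x y := by
    have toQuat_add : toQuat (x + y) = toQuat x + toQuat y := rfl
    simp [toQuat_add, add_mul, ofQuat]
  map_smul' r x := by
    have toQuat_smul : toQuat (r • x) = r • toQuat x := rfl
    simp [toQuat_smul, ofQuat]

variable (p : Quaternion ℝ) (x y : V4)

theorem toQuat_rightMul : toQuat (rightMul p x) = toQuat x * p := rfl

theorem ofQuat_toQuat_mul_star_toQuat :
    ofQuat (toQuat x * star (toQuat y)) =
      ![ip4 x y, -(wedge x y 0 + wedge x y 5), -(wedge x y 1 - wedge x y 4),
        -(wedge x y 2 + wedge x y 3)] := by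
  simp only [ofQuat, Quaternion.re_mul, Quaternion.imI_mul, Quaternion.imJ_mul, Quaternion.imK_mul,
    Quaternion.re_star, Quaternion.imI_star, Quaternion.imJ_star, Quaternion.imK_star]
  simp only [toQuat, ip4, wedge, pr, Fin.sum_univ_four, Matrix.cons_val]
  ring_nf

theorem ip4_eq_re_mul_star : ip4 x y = (toQuat x * star (toQuat y)).re :=
  (congrFun (ofQuat_toQuat_mul_star_toQuat x y) 0).symm

theorem ip4_rightMul_right : ip4 x (rightMul p y) = ip4 (rightMul (star p) x) y := by
  simp only [ip4_eq_re_mul_star, toQuat_rightMul, star_mul, mul_assoc]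

theorem toQuat_rightMul_mul_star_toQuat_rightMul :
    toQuat (rightMul p x) * star (toQuat (rightMul p y)) =
      Quaternion.normSq p • (toQuat x * star (toQuat y)) := by
  calc
    _ = toQuat x * (p * star p) * star (toQuat y) := by
      simp only [toQuat_rightMul, star_mul, mul_assoc]
    _ = Quaternion.normSq p • (toQuat x * star (toQuat y)) := by
      rw [Quaternion.self_mul_star, Quaternion.mul_coe_eq_smul, smul_mul_assoc]

theorem ip4_rightMul_rightMul :
    ip4 (rightMul p x) (rightMul p y) = Quaternion.normSq p * ip4 x y := by
  simp only [ip4_eq_re_mul_star, toQuat_rightMul_mul_star_toQuat_rightMul, Quaternion.re_smul,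
    smul_eq_mul]

theorem SelfDual.ip6_wedge_eq {w : L6} (hw : SelfDual w) :
    ip6 (wedge x y) w = -ip4 ![0, w 0, w 1, w 2] (ofQuat (toQuat x * star (toQuat y))) := by
  have h₅ : w 5 = w 0 := congrFun hw 0
  have h₄ : -w 4 = w 1 := congrFun hw 1
  have h₃ : w 3 = w 2 := congrFun hw 2
  rw [ofQuat_toQuat_mul_star_toQuat]
  simp only [ip6, ip4, Fin.sum_univ_six, Fin.sum_univ_four, Matrix.cons_val, h₅, ← h₄, h₃]
  ring

theorem SelfDual.ip6_wedge_rightMul {w : L6} (hw : SelfDual w) :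
    ip6 (wedge (rightMul p x) (rightMul p y)) w = Quaternion.normSq p * ip6 (wedge x y) w := by
  have ofQuat_smul (r : ℝ) (a : Quaternion ℝ) : ofQuat (r • a) = r • ofQuat a := by
    simp [ofQuat]
  rw [hw.ip6_wedge_eq, hw.ip6_wedge_eq, toQuat_rightMul_mul_star_toQuat_rightMul, ofQuat_smul,
    mul_neg]
  exact congrArg Neg.neg (dotProduct_smul _ _ _)

theorem SelfDual.appM_L2mapM_rightMul {w : L6} (hw : SelfDual w) :
    appM (L2mapM (rightMul p)) w = Quaternion.normSq p • w := by
  refine eq_of_forall_ip6_wedge_eq fun x y => ?_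
  rw [ip6_wedge_appM_L2mapM (ip4_rightMul_right p), hw.ip6_wedge_rightMul, Quaternion.normSq_star]
  exact (dotProduct_smul (Quaternion.normSq p) (wedge x y) w).symm

theorem det_rightMul :
    (Matrix.of fun i j => rightMul p (std4 j) i).det = Quaternion.normSq p ^ 2 :=
  det_eq_sq_of_appM_L2mapM_kahlerForm (selfDual_kahlerForm.appM_L2mapM_rightMul p)

end RightMul

/-- for a unit quaternion `q`, the map `x ↦ x·q⁻¹` of
`ℝ⁴ ≅ ℍ` is in `SO(4)` (linear, orthogonal, determinant one) and the induced
map on `Λ²ℝ⁴` (sending `x∧y` to `(xq⁻¹)∧(yq⁻¹)`) fixes every self-dual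
2-form. -/
theorem right_mul_unit_quaternion_fixes_selfdual (q : Quaternion ℝ)
    (hq : ‖q‖ = 1) :
    IsLinearMap ℝ (fun x : V4 => ofQuat (toQuat x * q⁻¹)) ∧
    (∀ x y : V4,
      ip4 (ofQuat (toQuat x * q⁻¹)) (ofQuat (toQuat y * q⁻¹)) = ip4 x y) ∧
    (Matrix.of fun i j : Fin 4 => ofQuat (toQuat (std4 j) * q⁻¹) i).det = 1 ∧
    (∀ x y : V4,
      appM (L2mapM (fun x => ofQuat (toQuat x * q⁻¹))) (wedge x y)
        = wedge (ofQuat (toQuat x * q⁻¹)) (ofQuat (toQuat y * q⁻¹))) ∧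
    (∀ w : L6, SelfDual w →
      appM (L2mapM (fun x => ofQuat (toQuat x * q⁻¹))) w = w) := by
  have hp : Quaternion.normSq q⁻¹ = 1 := by
    rw [Quaternion.normSq_eq_norm_mul_self, norm_inv, hq, inv_one, one_mul]
  refine ⟨(rightMul q⁻¹).isLinear, fun x y => ?_, ?_, appM_L2mapM_wedge (rightMul q⁻¹),
    fun w hw => ?_⟩
  · exact (ip4_rightMul_rightMul q⁻¹ x y).trans (by rw [hp, one_mul])
  · exact (det_rightMul q⁻¹).trans (by rw [hp, one_pow])
  · exact (hw.appM_L2mapM_rightMul q⁻¹).trans (by rw [hp, one_smul])
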